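/- arXiv:2207.04665 — 3 statements merged into one kernel-verified Lean document; each statement's English description precedes it below -/
import Mathlib

section
/- Let μ be an infinite cardinal with 2^μ = μ⁺. Suppose μ⁺ carries a strongly saturated ideal, that is, a normal, fine, μ⁺-complete proper ideal I over μ⁺ that is (μ⁺⁺, μ⁺⁺, μ)-saturated. Then the polarized partition relation (μ⁺⁺, μ⁺) → (μ⁺, μ⁺)_μ holds: for every function f : μ⁺⁺ × μ⁺ → μ there exist H₀ ⊆ μ⁺⁺ with |H₀| = μ⁺ and H₁ ⊆ μ⁺ with |H₁| = μ⁺ such that f takes at most one value on H₀ × H₁. -/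
open Cardinal Set

/-!
Write `κ = μ⁺`, so that `κ ^< κ = κ`, and work with the filter dual to the ideal. Completeness gives
every row of `f` a colour taken on a positive set; saturation and a pigeonhole argument then leave
more than `κ` rows with the same colour such that any fewer than `κ` of these rows have `κ` common
points of that colour. By cardinal arithmetic, some row `x₀` is *good*: each set of fewer than `κ`
points of row `x₀` lies in more than `κ` rows. A transfinite recursion of length `κ` now picks pairs
`(x, y)`, with every `y` in row `x₀`: goodness supplies an `x` whose row contains all earlier `y`s,
and the common points of few rows supply a `y` in row `x₀`, in row `x`, and in all the earlier rows.
-/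

universe u v

section Cardinal

theorem exists_lt_mk_preimage_singleton {α β : Type u} {κ : Cardinal.{u}} (hκ : ℵ₀ ≤ κ)
    (hα : #α ≤ κ) (hβ : κ < #β) (f : β → α) : ∃ a, κ < #(f ⁻¹' {a}) := by
  have hreg : (Order.succ κ).IsRegular := isRegular_succ hκ
  obtain ⟨a, ha⟩ := infinite_pigeonhole_card f _ (Order.succ_le_of_lt hβ) hreg.aleph0_le
    (by rwa [hreg.cof_ord, Order.lt_succ_iff])
  exact ⟨a, Order.succ_le_iff.1 ha⟩

theorem mk_setOf_mk_lt_le (α : Type u) (κ : Cardinal.{u}) :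
    #{t : Set α // #t < κ} ≤ κ * max #α ℵ₀ ^< κ := by
  let F : (Σ i : κ.ord.ToType, {t : Set α // #t ≤ #(Iio i)}) → Set α := fun p => p.2.1
  have hcover : {t : Set α | #t < κ} ⊆ range F := fun t ht => by
    obtain ⟨i, hi⟩ := Ordinal.typein_surj (α := κ.ord.ToType) (· < ·) (o := (#t).ord) (by simpa)
    have hcard : #(Iio i) = #t := calc
      #(Iio i) = (Ordinal.typein (α := κ.ord.ToType) (· < ·) i).card := rfl
      _ = #t := by rw [hi, card_ord]
    exact ⟨⟨i, t, hcard.ge⟩, rfl⟩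
  calc #{t : Set α // #t < κ}
      ≤ #(Σ i : κ.ord.ToType, {t : Set α // #t ≤ #(Iio i)}) :=
        (mk_le_mk_of_subset hcover).trans mk_range_le
    _ = sum fun i : κ.ord.ToType => #{t : Set α // #t ≤ #(Iio i)} := mk_sigma _
    _ ≤ sum fun _ : κ.ord.ToType => max #α ℵ₀ ^< κ :=
        sum_le_sum _ _ fun i => (mk_bounded_set_le α _).trans
          (le_powerlt _ (by simpa using mk_Iio_lt i))
    _ = κ * max #α ℵ₀ ^< κ := by simp

theorem powerlt_le_powerlt_right {a b c : Cardinal.{u}} (h : a ≤ b) : a ^< c ≤ b ^< c :=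
  powerlt_le.2 fun _ hx => (power_le_power_right h).trans (le_powerlt b hx)

theorem succ_powerlt_succ_self {μ : Cardinal.{u}} (hμ : ℵ₀ ≤ μ) (h : 2 ^ μ = Order.succ μ) :
    Order.succ μ ^< Order.succ μ = Order.succ μ := by
  rw [powerlt_succ (Order.succ_ne_bot μ), ← h, ← power_mul, mul_eq_self hμ]

theorem lift_powerlt (a b : Cardinal.{u}) :
    lift.{v} (a ^< b) = lift.{v} a ^< lift.{v} b := by
  refine le_antisymm (lift_iSup_le bddAbove_of_small fun c => ?_) (powerlt_le.2 fun c hc => ?_)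
  · rw [lift_power]
    exact le_powerlt _ (lift_lt.2 c.2)
  · obtain ⟨c, hcb, rfl⟩ := lt_lift_iff.1 hc
    rw [← lift_power, lift_le]
    exact le_powerlt a hcb

end Cardinal

theorem exists_forall_lt_rel {ι α : Type*} [Preorder ι] [WellFoundedLT ι] (r : α → α → Prop)
    (h : ∀ (i : ι) (g : Iio i → α), ∃ a, ∀ j, r (g j) a) :
    ∃ g : ι → α, ∀ i j, i < j → r (g i) (g j) := by
  choose next hnext using h
  let g : ι → α := wellFounded_lt.fix fun i rec => next i fun j => rec j j.2
  have hg (i : ι) : g i = next i fun j => g j := wellFounded_lt.fix_eq _ i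
  exact ⟨g, fun i j hij => hg j ▸ hnext j (fun k => g k) ⟨i, hij⟩⟩

section Rectangle

variable {X Y : Type u} {κ : Cardinal.{u}} {R : X → Y → Prop}

theorem exists_forall_lt_mk_setOf_forall_rel (hκ : ℵ₀ ≤ κ) (hpow : κ ^< κ = κ) (hX : κ < #X)
    (hY : #Y ≤ κ) (R : X → Y → Prop) :
    ∃ x₀, ∀ B : Set Y, #B < κ → (∀ y ∈ B, R x₀ y) → κ < #{x | ∀ y ∈ B, R x y} := by
  by_contra! hbad
  choose B hBκ hBR hB using hbad
  have hsets : #{t : Set Y // #t < κ} ≤ κ := calc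
    _ ≤ κ * max #Y ℵ₀ ^< κ := mk_setOf_mk_lt_le Y κ
    _ ≤ κ * κ ^< κ := by
      gcongr
      exact powerlt_le_powerlt_right (max_le hY hκ)
    _ = κ := by rw [hpow, mul_eq_self hκ]
  obtain ⟨t, ht⟩ := exists_lt_mk_preimage_singleton hκ hsets hX fun x => ⟨B x, hBκ x⟩
  obtain ⟨x, rfl⟩ : ((fun x => ⟨B x, hBκ x⟩) ⁻¹' {t}).Nonempty :=
    nonempty_coe_sort.1 (mk_ne_zero_iff.1 ht.ne_bot)
  refine (ht.trans_le ((mk_le_mk_of_subset fun x' hx' => ?_).trans (hB x))).false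
  have hBx : B x' = B x := congrArg Subtype.val hx'
  exact hBx ▸ hBR x'

theorem exists_notMem_rel_of_forall_lt_mk {x₀ : X} (hκ : ℵ₀ ≤ κ)
    (hgood : ∀ B : Set Y, #B < κ → (∀ y ∈ B, R x₀ y) → κ < #{x | ∀ y ∈ B, R x y})
    (hrows : ∀ T : Set X, #T < κ → κ ≤ #{y | ∀ x ∈ T, R x y})
    {A : Set X} {B : Set Y} (hA : #A < κ) (hB : #B < κ) (hBR : ∀ y ∈ B, R x₀ y) :
    ∃ x ∉ A, ∃ y ∉ B, R x₀ y ∧ R x y ∧ (∀ a ∈ A, R a y) ∧ ∀ b ∈ B, R x b := by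
  obtain ⟨x, hxB, hxA⟩ := sdiff_nonempty_of_mk_lt_mk (hA.trans (hgood B hB hBR))
  have hT : #(A ∪ {x₀, x} : Set X) < κ :=
    (mk_union_le _ _).trans_lt (add_lt_of_lt hκ hA ((lt_aleph0_of_finite _).trans_le hκ))
  obtain ⟨y, hyT, hyB⟩ := sdiff_nonempty_of_mk_lt_mk (hB.trans_le (hrows _ hT))
  exact ⟨x, hxA, y, hyB, hyT _ (by simp), hyT _ (by simp), fun a ha => hyT a (.inl ha), hxB⟩

theorem exists_mk_eq_forall_rel (hκ : ℵ₀ ≤ κ) (hpow : κ ^< κ = κ) (hX : κ < #X) (hY : #Y ≤ κ)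
    (hrows : ∀ T : Set X, #T < κ → κ ≤ #{y | ∀ x ∈ T, R x y}) :
    ∃ (H₀ : Set X) (H₁ : Set Y), #H₀ = κ ∧ #H₁ = κ ∧ ∀ x ∈ H₀, ∀ y ∈ H₁, R x y := by
  obtain ⟨x₀, hgood⟩ := exists_forall_lt_mk_setOf_forall_rel hκ hpow hX hY R
  let Good := {p : X × Y // R x₀ p.2 ∧ R p.1 p.2}
  let Compatible (p q : Good) : Prop :=
    p.1.1 ≠ q.1.1 ∧ p.1.2 ≠ q.1.2 ∧ R p.1.1 q.1.2 ∧ R q.1.1 p.1.2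
  have hnext (i : κ.ord.ToType) (g : Iio i → Good) : ∃ q, ∀ j, Compatible (g j) q := by
    have hi : #(Iio i) < κ := by simpa using mk_Iio_lt i
    obtain ⟨x, hxA, y, hyB, hx₀y, hxy, hAy, hxB⟩ := exists_notMem_rel_of_forall_lt_mk hκ hgood hrows
      (A := range fun j => (g j).1.1) (B := range fun j => (g j).1.2)
      (mk_range_le.trans_lt hi) (mk_range_le.trans_lt hi) (forall_mem_range.2 fun j => (g j).2.1)
    exact ⟨⟨(x, y), hx₀y, hxy⟩, fun j => ⟨fun h => hxA ⟨j, h⟩, fun h => hyB ⟨j, h⟩,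
      hAy _ ⟨j, rfl⟩, hxB _ ⟨j, rfl⟩⟩⟩
  obtain ⟨g, hg⟩ := exists_forall_lt_rel Compatible hnext
  have hinj₀ : Function.Injective fun i => (g i).1.1 :=
    .of_lt_imp_ne fun i j hij => (hg i j hij).1
  have hinj₁ : Function.Injective fun i => (g i).1.2 :=
    .of_lt_imp_ne fun i j hij => (hg i j hij).2.1
  refine ⟨range fun i => (g i).1.1, range fun i => (g i).1.2, ?_, ?_, ?_⟩
  · rw [mk_range_eq _ hinj₀, mk_ord_toType]
  · rw [mk_range_eq _ hinj₁, mk_ord_toType]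
  · rintro _ ⟨i, rfl⟩ _ ⟨j, rfl⟩
    rcases lt_trichotomy i j with hij | rfl | hji
    · exact (hg i j hij).2.2.1
    · exact (g i).2.2
    · exact (hg j i hji).2.2.2

end Rectangle

/-- The polarized partition relation `(X, Y) → (κ₀, κ₁)_C`, with the types `X`, `Y` and `C` in the
role of the cardinals `#X`, `#Y` and `#C`. -/
def PolarizedPartition (X Y C : Type u) (κ₀ κ₁ : Cardinal.{u}) : Prop :=
  ∀ f : X → Y → C, ∃ (H₀ : Set X) (H₁ : Set Y) (c : C),
    #H₀ = κ₀ ∧ #H₁ = κ₁ ∧ ∀ x ∈ H₀, ∀ y ∈ H₁, f x y = c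

/-- `(X, ν, <κ)`-saturation of the ideal dual to the filter `l`: every family of positive sets
indexed by `X` has a subfamily of size `ν` in which any fewer than `κ` members have positive
intersection. A set is positive if it contains `l`-frequently many points. -/
def IsSaturated {Y : Type u} (l : Filter Y) (X : Type u) (ν κ : Cardinal.{u}) : Prop :=
  ∀ A : X → Set Y, (∀ x, ∃ᶠ y in l, y ∈ A x) →
    ∃ S : Set X, #S = ν ∧ ∀ T ⊆ S, #T < κ → ∃ᶠ y in l, ∀ x ∈ T, y ∈ A x

section Saturation

variable {X Y C : Type u} {κ ν : Cardinal.{u}} {l : Filter Y} [CardinalInterFilter l κ]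

theorem le_mk_of_frequently_mem (hl : l ≤ Filter.cofinite) {A : Set Y} (hA : ∃ᶠ y in l, y ∈ A) :
    κ ≤ #A := by
  by_contra! hlt
  have hcompl : ∀ᶠ y in l, ∀ a ∈ A, y ≠ a :=
    (Filter.eventually_cardinal_ball hlt).2 fun a _ => hl (finite_singleton a).compl_mem_cofinite
  obtain ⟨y, hy, hne⟩ := (hA.and_eventually hcompl).exists
  exact hne y hy rfl

theorem exists_frequently_eq [l.NeBot] (hC : #C < κ) (g : Y → C) : ∃ c, ∃ᶠ y in l, g y = c := by
  by_contra! hrare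
  obtain ⟨y, hy⟩ := ((Filter.eventually_cardinal_forall hC).2 hrare).exists
  exact hy (g y) rfl

theorem polarizedPartition_of_isSaturated [l.NeBot] (hκ : ℵ₀ ≤ κ) (hpow : κ ^< κ = κ)
    (hY : #Y ≤ κ) (hC : #C < κ) (hν : κ < ν) (hl : l ≤ Filter.cofinite)
    (hsat : IsSaturated l X ν κ) : PolarizedPartition X Y C κ κ := by
  intro f
  choose colour hcolour using fun x => exists_frequently_eq (l := l) hC (f x)
  obtain ⟨S, hSν, hS⟩ := hsat (fun x => {y | f x y = colour x}) hcolour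
  obtain ⟨c, hc⟩ := exists_lt_mk_preimage_singleton hκ hC.le (hν.trans_eq hSν.symm)
    fun x : S => colour x
  let X' := (fun x : S => colour x) ⁻¹' {c}
  have hrows (T : Set X') (hT : #T < κ) : κ ≤ #{y | ∀ x ∈ T, f x.1 y = c} := by
    let T' : Set X := (fun x : X' => x.1.1) '' T
    have hT'S : T' ⊆ S := by rintro _ ⟨x, -, rfl⟩; exact x.1.2
    refine le_mk_of_frequently_mem hl ((hS T' hT'S (mk_image_le.trans_lt hT)).mono fun y hy => ?_)
    intro x hx
    exact (hy _ ⟨x, hx, rfl⟩).trans x.2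
  obtain ⟨H₀, H₁, hH₀, hH₁, hmono⟩ := exists_mk_eq_forall_rel hκ hpow hc hY hrows
  refine ⟨(fun x : X' => x.1.1) '' H₀, H₁, c, ?_, hH₁, ?_⟩
  · exact (mk_image_eq (Subtype.val_injective.comp Subtype.val_injective)).trans hH₀
  · rintro _ ⟨x, hx, rfl⟩
    exact hmono x hx

end Saturation

section Ideal

variable {α β γ : Type u} {κ ν : Cardinal.{u}} {D₀ : Set α} {D₁ : Set β} {I : Set (Set β)}

theorem PolarizedPartition.exists_subset_subset {D₂ : Set γ} {κ₀ κ₁ : Cardinal.{u}}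
    (h : PolarizedPartition D₀ D₁ D₂ κ₀ κ₁) (f : α → β → γ)
    (hf : ∀ a ∈ D₀, ∀ b ∈ D₁, f a b ∈ D₂) :
    ∃ (H₀ : Set α) (H₁ : Set β), H₀ ⊆ D₀ ∧ #H₀ = κ₀ ∧ H₁ ⊆ D₁ ∧ #H₁ = κ₁ ∧
      {c | ∃ a ∈ H₀, ∃ b ∈ H₁, f a b = c}.Subsingleton := by
  obtain ⟨H₀, H₁, c, hH₀, hH₁, hc⟩ := h fun a b => ⟨f a b, hf a a.2 b b.2⟩
  refine ⟨(↑) '' H₀, (↑) '' H₁, Subtype.coe_image_subset _ _,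
    (mk_image_eq Subtype.val_injective).trans hH₀, Subtype.coe_image_subset _ _,
    (mk_image_eq Subtype.val_injective).trans hH₁, subsingleton_of_forall_eq c.1 ?_⟩
  rintro _ ⟨_, ⟨a, ha, rfl⟩, _, ⟨b, hb, rfl⟩, rfl⟩
  exact congrArg Subtype.val (hc a ha b hb)

variable (hκ : 2 < κ) (hunion : ∀ S : Set (Set β), #S < κ → (∀ A ∈ S, A ∈ I) → ⋃₀ S ∈ I)
  (hdown : ∀ A ∈ I, ∀ B ⊆ A, B ∈ I)

/-- The trace on `D₁` of the filter dual to the `κ`-complete ideal `I`: a subset of `D₁` is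
positive for this filter if and only if it is not in `I`. -/
def dualFilterOn (D₁ : Set β) : Filter D₁ :=
  (Filter.ofCardinalUnion I hκ hunion hdown).comap (↑)

instance : CardinalInterFilter (dualFilterOn hκ hunion hdown D₁) κ :=
  inferInstanceAs (CardinalInterFilter (Filter.comap _ _) κ)

theorem frequently_dualFilterOn {A : Set D₁} :
    (∃ᶠ b in dualFilterOn hκ hunion hdown D₁, b ∈ A) ↔ (↑) '' A ∉ I := by
  rw [dualFilterOn, Filter.Frequently, Filter.Eventually, Filter.mem_comap_iff_compl,
    Filter.mem_ofCardinalUnion, compl_compl]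
  simp only [compl_ofPred, not_not, ofPred_mem_eq]
  rfl

theorem neBot_dualFilterOn (hD₁ : D₁ ∉ I) : (dualFilterOn hκ hunion hdown D₁).NeBot :=
  Filter.frequently_true_iff_neBot _ |>.1 <|
    (frequently_dualFilterOn hκ hunion hdown (A := Set.univ)).2 (by rwa [Subtype.coe_image_univ])

theorem dualFilterOn_le_cofinite (hfine : ∀ b ∈ D₁, {b} ∈ I) :
    dualFilterOn hκ hunion hdown D₁ ≤ Filter.cofinite := by
  refine Filter.le_cofinite_iff_eventually_ne.2 fun b => ?_
  by_contra hb
  have hpos := (frequently_dualFilterOn hκ hunion hdown (A := {b})).1 (by simpa using hb)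
  exact hpos (by simpa using hfine b b.2)

theorem isSaturated_dualFilterOn (hD₁ : D₁ ∉ I)
    (hsat : ∀ A : α → Set β, (∀ a ∈ D₀, A a ⊆ D₁ ∧ A a ∉ I) →
      ∃ S ⊆ D₀, #S = ν ∧ ∀ T ⊆ S, T.Nonempty → #T < κ → (⋂ a ∈ T, A a) ∉ I) :
    IsSaturated (dualFilterOn hκ hunion hdown D₁) D₀ ν κ := by
  intro A hA
  let A' : α → Set β := Function.extend (↑) (fun a : D₀ => (↑) '' A a) fun _ => ∅
  have hA' (a : D₀) : A' a = (↑) '' A a := Subtype.val_injective.extend_apply _ _ a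
  obtain ⟨S, hSD₀, hSν, hS⟩ := hsat A' fun a ha => by
    rw [hA' ⟨a, ha⟩]
    exact ⟨Subtype.coe_image_subset _ _, (frequently_dualFilterOn hκ hunion hdown).1 (hA ⟨a, ha⟩)⟩
  have hcard : #((↑) ⁻¹' S : Set D₀) = #S :=
    mk_preimage_of_injective_of_subset_range _ _ Subtype.val_injective (by simpa)
  refine ⟨(↑) ⁻¹' S, hcard.trans hSν, fun T hTS hT => ?_⟩
  have hne := neBot_dualFilterOn hκ hunion hdown hD₁
  rcases T.eq_empty_or_nonempty with rfl | ⟨a, ha⟩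
  · simpa using hne
  refine (frequently_dualFilterOn hκ hunion hdown).2 fun hT_mem => ?_
  refine hS ((↑) '' T) (image_subset_iff.2 hTS) ⟨a, a, ha, rfl⟩ (mk_image_le.trans_lt hT)
    (hdown _ hT_mem _ fun b hb => ?_)
  have hbA (x : D₀) (hx : x ∈ T) : b ∈ (↑) '' A x := hA' x ▸ mem_iInter₂.1 hb x ⟨x, hx, rfl⟩
  obtain ⟨b, -, rfl⟩ := hbA a ha
  exact ⟨b, fun x hx => Subtype.val_injective.mem_set_image.1 (hbA x hx), rfl⟩

end Ideal

theorem strongly_saturated_ideal_implies_polarized_partition_general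
    {lam κ ν μ : Cardinal.{u}} (hκ : ℵ₀ ≤ κ) (hpow : κ ^< κ = κ) (hμ : μ < κ) (hν : κ < ν)
    {I : Set (Set Ordinal.{u})}
    (hdown : ∀ A ∈ I, ∀ B ⊆ A, B ∈ I)
    (hcomplete : ∀ S ⊆ I, #S < lift.{u + 1} κ → ⋃₀ S ∈ I)
    (hfine : ∀ ξ < κ.ord, {ξ} ∈ I)
    (hproper : Iio κ.ord ∉ I)
    (hsat : ∀ A : Ordinal → Set Ordinal, (∀ i < lam.ord, A i ⊆ Iio κ.ord ∧ A i ∉ I) →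
      ∃ S ⊆ Iio lam.ord, #S = lift.{u + 1} ν ∧
        ∀ T ⊆ S, T.Nonempty → #T < lift.{u + 1} κ → (⋂ i ∈ T, A i) ∉ I)
    (f : Ordinal → Ordinal → Ordinal) (hf : ∀ α < lam.ord, ∀ β < κ.ord, f α β < μ.ord) :
    ∃ H₀ H₁ : Set Ordinal, H₀ ⊆ Iio lam.ord ∧ #H₀ = lift.{u + 1} κ ∧
      H₁ ⊆ Iio κ.ord ∧ #H₁ = lift.{u + 1} κ ∧
      {c | ∃ α ∈ H₀, ∃ β ∈ H₁, f α β = c}.Subsingleton := by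
  have hκ' : ℵ₀ ≤ lift.{u + 1} κ := aleph0_le_lift.2 hκ
  have h2 : 2 < lift.{u + 1} κ := (natCast_lt_aleph0 (n := 2)).trans_le hκ'
  have hunion (S : Set (Set Ordinal.{u})) (hS : #S < lift.{u + 1} κ) (hSI : ∀ A ∈ S, A ∈ I) :
      ⋃₀ S ∈ I := hcomplete S hSI hS
  have hne := neBot_dualFilterOn h2 hunion hdown hproper
  have hpart : PolarizedPartition (Iio lam.ord) (Iio κ.ord) (Iio μ.ord) _ _ :=
    polarizedPartition_of_isSaturated hκ' (by rw [← lift_powerlt, hpow])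
      (by rw [mk_Iio_ordinal, card_ord]) (by rwa [mk_Iio_ordinal, card_ord, lift_lt])
      (lift_lt.2 hν) (dualFilterOn_le_cofinite h2 hunion hdown hfine)
      (isSaturated_dualFilterOn h2 hunion hdown hproper hsat)
  exact hpart.exists_subset_subset f hf

/-- If `2^μ = μ⁺` and `μ⁺` carries a strongly saturated ideal, i.e. a normal, fine,
`μ⁺`-complete proper ideal which is `(μ⁺⁺, μ⁺⁺, μ)`-saturated, then the polarized
partition relation `(μ⁺⁺, μ⁺) → (μ⁺, μ⁺)_μ` holds. -/
theorem strongly_saturated_ideal_implies_polarized_partition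
    (μ : Cardinal.{0}) (hμ : ℵ₀ ≤ μ) (hGCH : 2 ^ μ = Order.succ μ)
    (I : Set (Set Ordinal.{0}))
    -- members of `I` are subsets of `μ⁺`
    (hIsub : ∀ A ∈ I, A ⊆ Set.Iio (Order.succ μ).ord)
    -- `I` is closed under subsets
    (hdown : ∀ A ∈ I, ∀ B ⊆ A, B ∈ I)
    -- `I` is `μ⁺`-complete
    (hcomplete : ∀ S : Set (Set Ordinal), S ⊆ I →
      #S < Cardinal.lift.{1} (Order.succ μ) → ⋃₀ S ∈ I)
    -- `I` is fine
    (hfine : ∀ ξ < (Order.succ μ).ord, ({ξ} : Set Ordinal) ∈ I)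
    -- `I` is proper
    (hproper : Set.Iio (Order.succ μ).ord ∉ I)
    -- `I` is normal: diagonal unions of members of `I` are in `I`
    (hnormal : ∀ A : Ordinal → Set Ordinal,
      (∀ ξ < (Order.succ μ).ord, A ξ ∈ I) →
      {α : Ordinal | α < (Order.succ μ).ord ∧ ∃ ξ < α, α ∈ A ξ} ∈ I)
    -- `I` is `(μ⁺⁺, μ⁺⁺, μ)`-saturated, i.e. strongly saturated
    (hsat : ∀ A : Ordinal → Set Ordinal,
      (∀ i < (Order.succ (Order.succ μ)).ord,
        A i ⊆ Set.Iio (Order.succ μ).ord ∧ A i ∉ I) →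
      ∃ S : Set Ordinal, S ⊆ Set.Iio (Order.succ (Order.succ μ)).ord ∧
        #S = Cardinal.lift.{1} (Order.succ (Order.succ μ)) ∧
        ∀ T ⊆ S, T.Nonempty → #T ≤ Cardinal.lift.{1} μ → (⋂ i ∈ T, A i) ∉ I) :
    ∀ f : Ordinal → Ordinal → Ordinal,
      (∀ α < (Order.succ (Order.succ μ)).ord, ∀ β < (Order.succ μ).ord, f α β < μ.ord) →
      ∃ H₀ H₁ : Set Ordinal,
        H₀ ⊆ Set.Iio (Order.succ (Order.succ μ)).ord ∧
        #H₀ = Cardinal.lift.{1} (Order.succ μ) ∧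
        H₁ ⊆ Set.Iio (Order.succ μ).ord ∧ #H₁ = Cardinal.lift.{1} (Order.succ μ) ∧
        Set.Subsingleton {c : Ordinal | ∃ α ∈ H₀, ∃ β ∈ H₁, f α β = c} :=
  strongly_saturated_ideal_implies_polarized_partition_general (hμ.trans (Order.le_succ μ))
    (succ_powerlt_succ_self hμ hGCH) (Order.lt_succ μ) (Order.lt_succ _) hdown hcomplete hfine
    hproper (by simpa only [lift_succ, Order.lt_succ_iff] using hsat)
end

section
/- Let P be a separative partial order, Q a partial order, and τ : P → Q a complete embedding, i.e., τ is order-preserving, maps incompatible elements of P to incompatible elements of Q, and every q ∈ Q has a reduct in P (some p ∈ P such that τ(r) is compatible with q for every r ≤ p). Let λ be a cardinal and ν an infinite cardinal. If Q has the (λ, λ, <ν)-chain condition, then P has the (λ, λ, <ν)-chain condition. -/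
open Cardinal Set

universe u

/-- Two elements of a partial order are compatible if they have a common lower bound. -/
def Compat {P : Type u} [PartialOrder P] (p q : P) : Prop :=
  ∃ r, r ≤ p ∧ r ≤ q

/-- A partial order is separative if whenever `p ≰ q` there is `r ≤ p` incompatible
with `q`. -/
def Separative (P : Type u) [PartialOrder P] : Prop :=
  ∀ p q : P, ¬ p ≤ q → ∃ r ≤ p, ¬ Compat r q

/-- `τ : P → Q` is a complete embedding: it is order-preserving, preserves
incompatibility, and every `q ∈ Q` has a reduct in `P`. -/
def CompleteEmbedding {P Q : Type u} [PartialOrder P] [PartialOrder Q] (τ : P → Q) : Prop :=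
  (∀ p p' : P, p ≤ p' → τ p ≤ τ p') ∧
  (∀ p p' : P, ¬ Compat p p' → ¬ Compat (τ p) (τ p')) ∧
  (∀ q : Q, ∃ p : P, ∀ r ≤ p, Compat (τ r) q)

/-- `P` has the `(λ, κ, <ν)`-chain condition: every `X ⊆ P` of size `λ` has a subset `Y`
of size `κ` such that every `Z ⊆ Y` of size `< ν` has a lower bound in `P`. -/
def ChainCondition (P : Type u) [PartialOrder P] (lam κ ν : Cardinal.{u}) : Prop :=
  ∀ X : Set P, #X = lam → ∃ Y ⊆ X, #Y = κ ∧
    ∀ Z ⊆ Y, #Z < ν → ∃ b : P, ∀ z ∈ Z, b ≤ z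

/-!
By separativity, `p ≤ z` as soon as every `r ≤ p` is compatible with `z`. Hence a reduct of a lower
bound of `τ '' Z` is a lower bound of `Z`. Since `p` is a reduct of `τ p`, this also shows that `τ`
reflects the order and so is injective, and the chain condition can be pulled back along `τ`.
-/

/-- `p` is a reduct of `q` along `τ : P → Q`: the image of every `r ≤ p` is compatible with `q`.
The third clause of `CompleteEmbedding` says that every `q` has a reduct. -/
def IsReduct {P Q : Type*} [PartialOrder P] [PartialOrder Q] (τ : P → Q) (p : P) (q : Q) : Prop :=
  ∀ r ≤ p, Compat (τ r) q

section

variable {P Q : Type*} [PartialOrder P] [PartialOrder Q] {τ : P → Q}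

theorem Compat.mono_right {p q q' : P} (h : Compat p q) (hq : q ≤ q') : Compat p q' :=
  let ⟨r, hrp, hrq⟩ := h
  ⟨r, hrp, hrq.trans hq⟩

theorem Separative.le_of_forall_compat (hP : Separative P) {p q : P}
    (h : ∀ r ≤ p, Compat r q) : p ≤ q := by
  by_contra hpq
  obtain ⟨r, hrp, hrq⟩ := hP p q hpq
  exact hrq (h r hrp)

theorem isReduct_map_of_monotone (hτ : Monotone τ) (p : P) : IsReduct τ p (τ p) :=
  fun r hr => ⟨τ r, le_rfl, hτ hr⟩

theorem IsReduct.le_of_le_map (hP : Separative P) (hτ : ∀ p p', Compat (τ p) (τ p') → Compat p p')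
    {p z : P} {q : Q} (hp : IsReduct τ p q) (hq : q ≤ τ z) : p ≤ z :=
  hP.le_of_forall_compat fun r hr => hτ r z ((hp r hr).mono_right hq)

end

namespace CompleteEmbedding

variable {P Q : Type u} [PartialOrder P] [PartialOrder Q] {τ : P → Q}

theorem monotone (hτ : CompleteEmbedding τ) : Monotone τ :=
  fun p p' => hτ.1 p p'

theorem compat_of_compat_map (hτ : CompleteEmbedding τ) (p p' : P) (h : Compat (τ p) (τ p')) :
    Compat p p' :=
  not_imp_not.mp (hτ.2.1 p p') h

theorem exists_isReduct (hτ : CompleteEmbedding τ) (q : Q) : ∃ p, IsReduct τ p q :=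
  hτ.2.2 q

theorem le_of_map_le_map (hτ : CompleteEmbedding τ) (hP : Separative P) {p p' : P}
    (h : τ p ≤ τ p') : p ≤ p' :=
  (isReduct_map_of_monotone hτ.monotone p).le_of_le_map hP hτ.compat_of_compat_map h

theorem injective (hτ : CompleteEmbedding τ) (hP : Separative P) : Function.Injective τ :=
  fun _ _ h => le_antisymm (hτ.le_of_map_le_map hP h.le) (hτ.le_of_map_le_map hP h.ge)

theorem bddBelow_of_bddBelow_image (hτ : CompleteEmbedding τ) (hP : Separative P) {Z : Set P}
    (h : BddBelow (τ '' Z)) : BddBelow Z := by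
  obtain ⟨q, hq⟩ := h
  obtain ⟨p, hp⟩ := hτ.exists_isReduct q
  exact ⟨p, fun z hz => hp.le_of_le_map hP hτ.compat_of_compat_map (hq (mem_image_of_mem τ hz))⟩

end CompleteEmbedding

theorem ChainCondition.of_injective {P Q : Type u} [PartialOrder P] [PartialOrder Q] {f : P → Q}
    {lam κ ν : Cardinal.{u}} (hQ : ChainCondition Q lam κ ν) (hf : Function.Injective f)
    (hbdd : ∀ Z : Set P, BddBelow (f '' Z) → BddBelow Z) : ChainCondition P lam κ ν := by
  intro X hX
  obtain ⟨W, hWX, hW, hbound⟩ := hQ (f '' X) ((mk_image_eq hf).trans hX)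
  obtain ⟨Y, hYX, rfl⟩ := subset_image_iff.mp hWX
  refine ⟨Y, hYX, (mk_image_eq hf).symm.trans hW, fun Z hZY hZν => ?_⟩
  have hfZ : BddBelow (f '' Z) := hbound (f '' Z) (image_mono hZY) ((mk_image_eq hf).trans_lt hZν)
  exact hbdd Z hfZ

theorem chainCondition_of_completeEmbedding_general
    {P Q : Type u} [PartialOrder P] [PartialOrder Q]
    (hP : Separative P) (τ : P → Q) (hτ : CompleteEmbedding τ)
    (lam κ ν : Cardinal.{u}) (hQ : ChainCondition Q lam κ ν) : ChainCondition P lam κ ν :=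
  hQ.of_injective (hτ.injective hP) fun _ => hτ.bddBelow_of_bddBelow_image hP

/-- If there is a complete embedding of a separative partial order `P` into `Q` and `Q`
has the `(λ, λ, <ν)`-chain condition, then so does `P`. -/
theorem chainCondition_of_completeEmbedding
    {P Q : Type u} [PartialOrder P] [PartialOrder Q]
    (hP : Separative P) (τ : P → Q) (hτ : CompleteEmbedding τ)
    (lam ν : Cardinal.{u}) (hν : ℵ₀ ≤ ν)
    (hQ : ChainCondition Q lam lam ν) : ChainCondition P lam lam ν :=
  chainCondition_of_completeEmbedding_general hP τ hτ lam lam ν hQ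
end

section
/- Let P be a well-met partial order, i.e., every nonempty subset of P that has a lower bound in P has a greatest lower bound in P. Let λ be a cardinal and ν a regular infinite cardinal. Then P is (λ, <ν)-centered if and only if P can be covered by λ many <ν-complete filters, i.e., P is the union of at most λ many subsets each of which is a <ν-complete filter on P. -/
open Cardinal Set

universe u

/-- A partial order is well-met if every nonempty subset having a lower bound has a
greatest lower bound. -/
def WellMet (P : Type u) [PartialOrder P] : Prop :=
  ∀ S : Set P, S.Nonempty → (∃ b : P, ∀ s ∈ S, b ≤ s) → ∃ g : P, IsGLB S g

/-!
If `C` is `<ν`-centered, then the upward closure of the meets of its nonempty subsets of size `< ν`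
is a `<ν`-complete filter containing `C`: given fewer than `ν` members of it, each lying above the
meet of a small subset of `C`, regularity of `ν` makes the union of these subsets small, so this
union has a meet, which lies below all the given members.
-/

section CompleteFilter

variable {P : Type u} [Preorder P] {ν : Cardinal.{u}} {C F : Set P}

variable (ν) in
/-- `C` is `<ν`-centered: its nonempty subsets of size `< ν` have lower bounds. The empty subset is
left out, so that the empty set is centered even when `P` is empty. -/
def IsCentered (C : Set P) : Prop :=
  ∀ Z ⊆ C, Z.Nonempty → #Z < ν → BddBelow Z

variable (ν) in
/-- `F` is a `<ν`-complete filter: a filter in which every nonempty subset of size `< ν` has a lower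
bound belonging to `F`. -/
structure IsCompleteFilter (F : Set P) : Prop where
  isPFilter : Order.IsPFilter F
  exists_lowerBound : ∀ Z ⊆ F, Z.Nonempty → #Z < ν → ∃ b ∈ F, b ∈ lowerBounds Z

variable (P ν) in
/-- `P` has bounded `<ν`-meets: every nonempty subset of size `< ν` that has a lower bound has a
greatest one. This is the part of `WellMet` that concerns subsets of size `< ν`. -/
def HasBoundedMeets : Prop :=
  ∀ Z : Set P, Z.Nonempty → #Z < ν → BddBelow Z → ∃ g, IsGLB Z g

variable (ν) in
/-- The upward closure of the meets of nonempty subsets of `C` of size `< ν`, a filter when `C` is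
`<ν`-centered and these meets exist. The condition `q ∈ upperBounds (lowerBounds Z)` says that `q`
is above the meet of `Z` without choosing one. -/
def generatedFilter (C : Set P) : Set P :=
  {q | ∃ Z ⊆ C, Z.Nonempty ∧ #Z < ν ∧ q ∈ upperBounds (lowerBounds Z)}

theorem isCentered_empty : IsCentered ν (∅ : Set P) :=
  fun _ hZ hne ↦ absurd (hne.mono hZ) not_nonempty_empty

theorem isCompleteFilter_iff :
    IsCompleteFilter ν F ↔
      F.Nonempty ∧ (∀ p ∈ F, ∀ q, p ≤ q → q ∈ F) ∧
        (∀ p ∈ F, ∀ q ∈ F, ∃ r ∈ F, r ≤ p ∧ r ≤ q) ∧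
        ∀ Z ⊆ F, Z.Nonempty → #Z < ν → ∃ b ∈ F, ∀ z ∈ Z, b ≤ z :=
  ⟨fun ⟨hF, hcomplete⟩ ↦ ⟨hF.Nonempty, fun _ hp _ hpq ↦ hF.IsLowerSet hpq hp, hF.Directed,
      hcomplete⟩,
    fun ⟨hne, hup, hdir, hcomplete⟩ ↦ ⟨.of_def hne hdir fun hpq hp ↦ hup _ hp _ hpq, hcomplete⟩⟩

theorem IsCompleteFilter.isCentered (hF : IsCompleteFilter ν F) : IsCentered ν F :=
  fun Z hZ hne hcard ↦
    let ⟨b, _, hb⟩ := hF.exists_lowerBound Z hZ hne hcard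
    ⟨b, hb⟩

theorem isCompleteFilter_of_isUpperSet (hup : IsUpperSet F) (hν : 2 < ν) (hne : F.Nonempty)
    (hcomplete : ∀ Z ⊆ F, Z.Nonempty → #Z < ν → ∃ b ∈ F, b ∈ lowerBounds Z) :
    IsCompleteFilter ν F := by
  have hdir : DirectedOn (· ≥ ·) F := by
    intro p hp q hq
    have hcard : #({p, q} : Set P) ≤ 2 := by
      simpa only [mk_singleton, one_add_one_eq_two] using mk_insert_le (s := {q}) (a := p)
    obtain ⟨r, hr, hrpq⟩ := hcomplete {p, q} (pair_subset hp hq) (insert_nonempty p {q})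
      (hcard.trans_lt hν)
    exact ⟨r, hr, hrpq (mem_insert p {q}), hrpq (mem_insert_of_mem p rfl)⟩
  exact ⟨.of_def hne hdir fun hpq hp ↦ hup hpq hp, hcomplete⟩

theorem subset_generatedFilter (hν : 1 < ν) : C ⊆ generatedFilter ν C :=
  fun p hp ↦ ⟨{p}, singleton_subset_iff.2 hp, singleton_nonempty p, by rwa [mk_singleton],
    subset_upperBounds_lowerBounds {p} rfl⟩

theorem isUpperSet_generatedFilter : IsUpperSet (generatedFilter ν C) :=
  fun _ _ hpq ⟨Z, hZ, hne, hcard, hp⟩ ↦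
    ⟨Z, hZ, hne, hcard, upperBounds_mono_mem hpq hp⟩

theorem IsCentered.exists_lowerBound_mem_generatedFilter (hC : IsCentered ν C)
    (hP : HasBoundedMeets P ν) (hν : ν.IsRegular) {Z : Set P} (hZ : Z ⊆ generatedFilter ν C)
    (hne : Z.Nonempty) (hcard : #Z < ν) : ∃ b ∈ generatedFilter ν C, b ∈ lowerBounds Z := by
  choose W hWC hWne hWcard hW using fun z : Z ↦ hZ z.2
  have hUC : ⋃ z, W z ⊆ C := iUnion_subset hWC
  have hUne : (⋃ z, W z).Nonempty :=
    let ⟨z, hz⟩ := hne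
    (hWne ⟨z, hz⟩).mono (subset_iUnion W ⟨z, hz⟩)
  have hUcard : #(⋃ z, W z) < ν := (card_iUnion_lt_iff_forall_of_isRegular hν hcard).2 hWcard
  obtain ⟨g, hg⟩ := hP _ hUne hUcard (hC _ hUC hUne hUcard)
  refine ⟨g, ⟨_, hUC, hUne, hUcard, hg.2⟩, fun z hz ↦ hW ⟨z, hz⟩ ?_⟩
  exact lowerBounds_mono_set (subset_iUnion W ⟨z, hz⟩) hg.1

theorem IsCentered.isCompleteFilter_generatedFilter (hC : IsCentered ν C)
    (hP : HasBoundedMeets P ν) (hν : ν.IsRegular) (hne : C.Nonempty) :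
    IsCompleteFilter ν (generatedFilter ν C) :=
  isCompleteFilter_of_isUpperSet isUpperSet_generatedFilter
    (ofNat_lt_aleph0.trans_le hν.aleph0_le)
    (hne.mono (subset_generatedFilter (one_lt_aleph0.trans_le hν.aleph0_le)))
    fun _ hZ ↦ hC.exists_lowerBound_mem_generatedFilter hP hν hZ

end CompleteFilter

theorem mk_image_Iio_ord_le {α : Type u} (f : Ordinal.{u} → α) (c : Cardinal.{u}) :
    #(f '' Iio c.ord) ≤ c := by
  have h := mk_image_le_lift (f := f) (s := Iio c.ord)
  rwa [mk_Iio_ordinal, card_ord, lift_lift, lift_le] at h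

theorem nonempty_embedding_Iio_ord {α : Type u} {c : Cardinal.{u}} (h : #α ≤ c) :
    Nonempty (α ↪ Iio c.ord) := by
  rw [← lift_mk_le', mk_Iio_ordinal, card_ord, lift_lift, lift_le]
  exact h

theorem exists_ordinal_cover_iff {α : Type u} {c : Cardinal.{u}} {Q : Set α → Prop} (hQ : Q ∅) :
    (∃ C : Ordinal.{u} → Set α, (∀ a, ∃ i < c.ord, a ∈ C i) ∧ ∀ i < c.ord, Q (C i)) ↔
      ∃ 𝒞 : Set (Set α), #𝒞 ≤ c ∧ (∀ a, ∃ S ∈ 𝒞, a ∈ S) ∧ ∀ S ∈ 𝒞, Q S := by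
  constructor
  · rintro ⟨C, hcov, hC⟩
    exact ⟨C '' Iio c.ord, mk_image_Iio_ord_le C c, fun a ↦ exists_mem_image.2 (hcov a),
      forall_mem_image.2 hC⟩
  · rintro ⟨𝒞, hcard, hcov, h𝒞⟩
    obtain ⟨e⟩ := nonempty_embedding_Iio_ord hcard
    have he : Function.Injective fun S ↦ (e S : Ordinal) := Subtype.val_injective.comp e.injective
    refine ⟨Function.extend (fun S ↦ (e S : Ordinal)) Subtype.val fun _ ↦ ∅, fun a ↦ ?_,
      fun i _ ↦ ?_⟩
    · obtain ⟨S, hS, ha⟩ := hcov a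
      exact ⟨e ⟨S, hS⟩, (e ⟨S, hS⟩).2, by rwa [he.extend_apply]⟩
    · by_cases hi : ∃ S, (e S : Ordinal) = i
      · obtain ⟨S, rfl⟩ := hi
        rw [he.extend_apply]
        exact h𝒞 S S.2
      · rwa [Function.extend_apply' _ _ _ hi]

theorem WellMet.hasBoundedMeets {P : Type u} [PartialOrder P] (hP : WellMet P)
    (ν : Cardinal.{u}) : HasBoundedMeets P ν :=
  fun Z hne _ hbdd ↦ hP Z hne hbdd

theorem centered_iff_covered_by_complete_filters_general {P : Type u} [Preorder P]
    {ν : Cardinal.{u}} (hP : HasBoundedMeets P ν) (hν : ν.IsRegular) (lam : Cardinal.{u}) :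
    (∃ C : Ordinal.{u} → Set P,
      (∀ p, ∃ i < lam.ord, p ∈ C i) ∧ ∀ i < lam.ord, IsCentered ν (C i)) ↔
    ∃ 𝔽 : Set (Set P), #𝔽 ≤ lam ∧ (∀ p, ∃ F ∈ 𝔽, p ∈ F) ∧ ∀ F ∈ 𝔽, IsCompleteFilter ν F := by
  rw [exists_ordinal_cover_iff isCentered_empty]
  constructor
  · rintro ⟨𝒞, hcard, hcov, h𝒞⟩
    have hone : 1 < ν := one_lt_aleph0.trans_le hν.aleph0_le
    refine ⟨generatedFilter ν '' {C ∈ 𝒞 | C.Nonempty},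
      mk_image_le.trans ((mk_le_mk_of_subset (sep_subset _ _)).trans hcard), fun p ↦ ?_,
      forall_mem_image.2 fun C hC ↦ (h𝒞 C hC.1).isCompleteFilter_generatedFilter hP hν hC.2⟩
    obtain ⟨C, hC, hp⟩ := hcov p
    exact ⟨_, mem_image_of_mem _ ⟨hC, p, hp⟩, subset_generatedFilter hone hp⟩
  · rintro ⟨𝔽, hcard, hcov, h𝔽⟩
    exact ⟨𝔽, hcard, hcov, fun F hF ↦ (h𝔽 F hF).isCentered⟩

/-- For a well-met partial order `P` and regular `ν`, `P` is `(λ, <ν)`-centered (the union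
of `λ` many `<ν`-centered subsets) if and only if `P` can be covered by at most `λ` many
`<ν`-complete filters. -/
theorem centered_iff_covered_by_complete_filters
    {P : Type u} [PartialOrder P] (hwm : WellMet P)
    (lam ν : Cardinal.{u}) (hν : ν.IsRegular) :
    (∃ C : Ordinal.{u} → Set P,
      (∀ p : P, ∃ i < lam.ord, p ∈ C i) ∧
      ∀ i < lam.ord, ∀ Z ⊆ C i, Z.Nonempty → #Z < ν → ∃ b : P, ∀ z ∈ Z, b ≤ z) ↔
    (∃ 𝔽 : Set (Set P), #𝔽 ≤ lam ∧
      (∀ p : P, ∃ F ∈ 𝔽, p ∈ F) ∧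
      ∀ F ∈ 𝔽,
        -- `F` is a filter: nonempty, upward closed, downward directed
        F.Nonempty ∧
        (∀ p ∈ F, ∀ q : P, p ≤ q → q ∈ F) ∧
        (∀ p ∈ F, ∀ q ∈ F, ∃ r ∈ F, r ≤ p ∧ r ≤ q) ∧
        -- `F` is `<ν`-complete
        (∀ Z ⊆ F, Z.Nonempty → #Z < ν → ∃ b ∈ F, ∀ z ∈ Z, b ≤ z)) := by
  simp_rw [← isCompleteFilter_iff]
  exact centered_iff_covered_by_complete_filters_general (hwm.hasBoundedMeets ν) hν lam
end
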